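/- (Main theorem) Let x* be a local minimizer of (NLP) at which MFCQ holds. Let r be the rank of J(x*) and assume that the rank of J(x) is at most r+1 for every x in some neighborhood of x*. Assume further the smooth-SVD condition: there exist functions x ↦ U(x) ∈ ℝ^{(m+q)×(m+q)}, x ↦ Σ(x) ∈ ℝ^{(m+q)×n}, x ↦ V(x) ∈ ℝ^{n×n}, differentiable in a neighborhood of x*, such that J(x) = U(x)Σ(x)V(x)ᵀ, Σ(x) is diagonal with diagonal entries σ₁(x),…,σ_k(x) where k := min{m+q, n} and σ_i(x) = 0 whenever i exceeds the rank of J(x), and the columns of U(x*) and the columns of V(x*) are non-zero and pairwise orthogonal. Then there exists a Lagrange multiplier (λ,μ) ∈ Λ(x*) such that dᵀ∇²ₓₓL(x*,λ,μ)d ≥ 0 for all d ∈ S(x*) (WSOC holds at x*). -/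

import Mathlib

open scoped BigOperators Pointwise
open Matrix

attribute [local instance] Classical.propDecidable

noncomputable section

/-- The gradient vector of `φ` at `x` (the vector of partial derivatives). -/
def gradVec {n : ℕ} (φ : (Fin n → ℝ) → ℝ) (x : Fin n → ℝ) : Fin n → ℝ :=
  fun k => fderiv ℝ φ x (Pi.single k 1)

/-- The quadratic form `d ↦ dᵀ ∇²φ(x) d` of the Hessian of `φ` at `x`. -/
def hessQ {n : ℕ} (φ : (Fin n → ℝ) → ℝ) (x d : Fin n → ℝ) : ℝ :=
  iteratedFDeriv ℝ 2 φ x ![d, d]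

/-- Feasibility for the problem (NLP). -/
def Feas {n m p : ℕ} (h : Fin m → (Fin n → ℝ) → ℝ) (g : Fin p → (Fin n → ℝ) → ℝ)
    (x : Fin n → ℝ) : Prop :=
  (∀ i, h i x = 0) ∧ ∀ j, g j x ≤ 0

/-- The Lagrangian of (NLP). -/
def Lagr {n m p : ℕ} (f : (Fin n → ℝ) → ℝ) (h : Fin m → (Fin n → ℝ) → ℝ)
    (g : Fin p → (Fin n → ℝ) → ℝ) (lam : Fin m → ℝ) (mu : Fin p → ℝ) (x : Fin n → ℝ) : ℝ :=
  f x + ∑ i, lam i * h i x + ∑ j, mu j * g j x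

/-- `(lam, mu)` is a Lagrange multiplier at `xs`, i.e. `(lam, mu) ∈ Λ(xs)`. -/
def IsLagMult {n m p : ℕ} (f : (Fin n → ℝ) → ℝ) (h : Fin m → (Fin n → ℝ) → ℝ)
    (g : Fin p → (Fin n → ℝ) → ℝ) (xs : Fin n → ℝ) (lam : Fin m → ℝ) (mu : Fin p → ℝ) : Prop :=
  (∀ j, 0 ≤ mu j) ∧ fderiv ℝ (Lagr f h g lam mu) xs = 0 ∧ ∀ j, mu j * g j xs = 0

/-- The Mangasarian-Fromovitz constraint qualification at `xs`. -/
def MFCQ {n m p : ℕ} (h : Fin m → (Fin n → ℝ) → ℝ) (g : Fin p → (Fin n → ℝ) → ℝ)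
    (xs : Fin n → ℝ) : Prop :=
  LinearIndependent ℝ (fun i : Fin m => fderiv ℝ (h i) xs) ∧
  ∃ d : Fin n → ℝ, (∀ i, fderiv ℝ (h i) xs d = 0) ∧
    ∀ j, g j xs = 0 → fderiv ℝ (g j) xs d < 0

/-- Membership in the critical cone `C(xs)`. -/
def critCone {n m p : ℕ} (f : (Fin n → ℝ) → ℝ) (h : Fin m → (Fin n → ℝ) → ℝ)
    (g : Fin p → (Fin n → ℝ) → ℝ) (xs d : Fin n → ℝ) : Prop :=
  fderiv ℝ f xs d = 0 ∧ (∀ i, fderiv ℝ (h i) xs d = 0) ∧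
    ∀ j, g j xs = 0 → fderiv ℝ (g j) xs d ≤ 0

/-- Membership in the critical subspace `S(xs)`. -/
def critSub {n m p : ℕ} (h : Fin m → (Fin n → ℝ) → ℝ) (g : Fin p → (Fin n → ℝ) → ℝ)
    (xs d : Fin n → ℝ) : Prop :=
  (∀ i, fderiv ℝ (h i) xs d = 0) ∧ ∀ j, g j xs = 0 → fderiv ℝ (g j) xs d = 0

/-- The Jacobian matrix `J(x)` of equality and active inequality constraints
(activity taken at the base point `xs`). -/
def Jac {n m p : ℕ} (h : Fin m → (Fin n → ℝ) → ℝ) (g : Fin p → (Fin n → ℝ) → ℝ)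
    (xs x : Fin n → ℝ) : Matrix (Fin m ⊕ {j : Fin p // g j xs = 0}) (Fin n) ℝ :=
  Matrix.of fun i k =>
    Sum.elim (fun i' => fderiv ℝ (h i') x (Pi.single k 1))
      (fun j' => fderiv ℝ (g j'.1) x (Pi.single k 1)) i

/-- A first-order cone: the (direct) sum of a linear subspace and a ray. -/
def IsFirstOrderCone {n : ℕ} (K : Set (Fin n → ℝ)) : Prop :=
  ∃ (W : Submodule ℝ (Fin n → ℝ)) (d0 : Fin n → ℝ),
    K = {x | ∃ w ∈ W, ∃ r : ℝ, 0 ≤ r ∧ x = w + r • d0}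

/-- The rank of a family of vectors: the dimension of its linear span. -/
def famRank {ι : Type*} {n : ℕ} (v : ι → (Fin n → ℝ)) : ℕ :=
  Module.finrank ℝ (Submodule.span ℝ (Set.range v))

/-- The smooth singular value decomposition assumption (Assumption 1 of the paper) for the
Jacobian `J(x)` near `xs`, stated via an enumeration `e` of the rows:
`J(x) = U(x) Σ(x) V(x)ᵀ` on a neighborhood of `xs`, with all entries differentiable there,
`Σ(x)` diagonal with vanishing diagonal entries beyond the rank of `J(x)`, and the columns
of `U(xs)` and of `V(xs)` non-zero and pairwise orthogonal. -/
def SmoothSVD {n m p : ℕ} (h : Fin m → (Fin n → ℝ) → ℝ) (g : Fin p → (Fin n → ℝ) → ℝ)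
    (xs : Fin n → ℝ)
    (e : (Fin m ⊕ {j : Fin p // g j xs = 0}) ≃
      Fin (m + Fintype.card {j : Fin p // g j xs = 0})) : Prop :=
  ∃ O ∈ nhds xs,
    ∃ (U : (Fin n → ℝ) →
        Matrix (Fin (m + Fintype.card {j : Fin p // g j xs = 0}))
          (Fin (m + Fintype.card {j : Fin p // g j xs = 0})) ℝ)
      (S : (Fin n → ℝ) →
        Matrix (Fin (m + Fintype.card {j : Fin p // g j xs = 0})) (Fin n) ℝ)
      (V : (Fin n → ℝ) → Matrix (Fin n) (Fin n) ℝ),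
      (∀ i j', DifferentiableOn ℝ (fun x => U x i j') O) ∧
      (∀ i k, DifferentiableOn ℝ (fun x => S x i k) O) ∧
      (∀ k k', DifferentiableOn ℝ (fun x => V x k k') O) ∧
      (∀ x ∈ O, ∀ i k, Jac h g xs x (e.symm i) k = (U x * S x * (V x)ᵀ) i k) ∧
      (∀ x ∈ O, ∀ (i : Fin (m + Fintype.card {j : Fin p // g j xs = 0})) (k : Fin n),
        (i : ℕ) ≠ (k : ℕ) → S x i k = 0) ∧
      (∀ x ∈ O, ∀ (i : Fin (m + Fintype.card {j : Fin p // g j xs = 0})) (k : Fin n),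
        (i : ℕ) = (k : ℕ) → (Jac h g xs x).rank ≤ (i : ℕ) → S x i k = 0) ∧
      (∀ a, (fun i => U xs i a) ≠ 0) ∧
      (∀ a b, a ≠ b → ∑ i, U xs i a * U xs i b = 0) ∧
      (∀ a, (fun k => V xs k a) ≠ 0) ∧
      (∀ a b, a ≠ b → ∑ k, V xs k a * V xs k b = 0)

theorem yuan_aux {V : Type*} [AddCommGroup V] [Module ℝ V] (W : Submodule ℝ V) (H Q : V → ℝ)
    (hH : ∀ d e, ∃ c, ∀ s : ℝ, H (d + s • e) = H d + s * c + s ^ 2 * H e)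
    (hQ : ∀ d e, ∃ c, ∀ s : ℝ, Q (d + s • e) = Q d + s * c + s ^ 2 * Q e)
    (a b : ℝ) (hab : a ≤ b)
    (hmem : ∀ d ∈ W, ∃ t ∈ Set.Icc a b, 0 ≤ H d + t * Q d) :
    ∃ t ∈ Set.Icc a b, ∀ d ∈ W, 0 ≤ H d + t * Q d := by
  have key : ∀ d ∈ W, ∀ e ∈ W, 0 < Q d → Q e < 0 → -H d / Q d ≤ H e / (-Q e) := by
    intro d hd e he hQd hQe
    obtain ⟨c, hc⟩ := hQ d e
    obtain ⟨c', hc'⟩ := hH d e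
    have hpos : 0 < c ^ 2 - 4 * Q d * Q e := by nlinarith [mul_pos hQd (neg_pos.2 hQe), sq_nonneg c]
    set D := Real.sqrt (c ^ 2 - 4 * Q d * Q e) with hD
    have hDs : D ^ 2 = c ^ 2 - 4 * Q d * Q e := Real.sq_sqrt hpos.le
    have hDp : 0 < D := Real.sqrt_pos.2 hpos
    have hne : Q e ≠ 0 := hQe.ne
    have root : ∀ δ : ℝ, δ ^ 2 = c ^ 2 - 4 * Q d * Q e →
        0 ≤ H d + ((-c + δ) / (2 * Q e)) * c' + ((-c + δ) / (2 * Q e)) ^ 2 * H e := by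
      intro δ hδ
      obtain ⟨t, -, ht⟩ := hmem (d + ((-c + δ) / (2 * Q e)) • e) (W.add_mem hd (W.smul_mem _ he))
      have h0 : Q (d + ((-c + δ) / (2 * Q e)) • e) = 0 := by
        rw [hc]; field_simp; nlinarith
      rw [h0, hc'] at ht
      simpa using ht
    have r1 := root D hDs
    have r2 := root (-D) (by rw [neg_sq]; exact hDs)
    set s1 := (-c + D) / (2 * Q e) with hs1
    set s2 := (-c + -D) / (2 * Q e) with hs2
    have e1 : s1 * (2 * Q e) = -c + D := by rw [hs1]; field_simp
    have e2 : s2 * (2 * Q e) = -c + -D := by rw [hs2]; field_simp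
    have hprod : s1 * s2 * Q e = Q d := by
      have : (s1 * s2 * Q e) * (4 * Q e) = Q d * (4 * Q e) := by
        have : (s1 * (2 * Q e)) * (s2 * (2 * Q e)) = (-c + D) * (-c + -D) := by rw [e1, e2]
        nlinarith
      exact mul_right_cancel₀ (by simpa using hne) this
    have hlt : s1 < s2 := by
      by_contra hcon
      push Not at hcon
      nlinarith
    have hneg : s1 * s2 < 0 := by
      by_contra hcon
      push Not at hcon
      nlinarith
    have s1neg : s1 < 0 := by
      by_contra hcon
      push Not at hcon
      nlinarith
    have s2pos : 0 < s2 := by nlinarith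
    have hfin : 0 ≤ (s2 - s1) * (H d - s1 * s2 * H e) := by
      nlinarith [mul_nonneg s2pos.le r1, mul_nonneg (neg_pos.2 s1neg).le r2]
    have hfin2 : 0 ≤ H d - s1 * s2 * H e := nonneg_of_mul_nonneg_right hfin (by linarith)
    rw [div_le_div_iff₀ hQd (by linarith)]
    have : 0 ≤ (H d - s1 * s2 * H e) * (-Q e) := mul_nonneg hfin2 (by linarith)
    have h3 : s1 * s2 * H e * Q e = Q d * H e := by rw [← hprod]; ring
    nlinarith
  let L : Set ℝ := {l | l = a ∨ ∃ d ∈ W, 0 < Q d ∧ l = -H d / Q d}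
  let R : Set ℝ := {l | l = b ∨ ∃ d ∈ W, Q d < 0 ∧ l = H d / (-Q d)}
  obtain ⟨t, ht1, ht2⟩ := exists_between_of_forall_le (s := L) (t := R) ⟨a, Or.inl rfl⟩
    ⟨b, Or.inl rfl⟩ (by
      rintro l (rfl | ⟨d, hd, hQd, rfl⟩) u (rfl | ⟨e, he, hQe, rfl⟩)
      · exact hab
      · obtain ⟨t, ht, h⟩ := hmem e he
        rw [le_div_iff₀ (by linarith)]
        nlinarith [ht.1]
      · obtain ⟨t, ht, h⟩ := hmem d hd
        rw [div_le_iff₀ hQd]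
        nlinarith [ht.2]
      · exact key d hd e he hQd hQe)
  refine ⟨t, ⟨ht1 (Or.inl rfl), ht2 (Or.inl rfl)⟩, fun d hd => ?_⟩
  rcases lt_trichotomy (Q d) 0 with hq | hq | hq
  · have := ht2 (Or.inr ⟨d, hd, hq, rfl⟩)
    rw [le_div_iff₀ (by linarith)] at this
    linarith
  · obtain ⟨t, ht, h⟩ := hmem d hd
    rw [hq] at h ⊢
    simpa using h
  · have := ht1 (Or.inr ⟨d, hd, hq, rfl⟩)
    rw [div_le_iff₀ hq] at this
    linarith

/-- dual basis of an independent family of functionals -/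
theorem dual_vecs {n m : ℕ} (h : Fin m → ((Fin n → ℝ) →L[ℝ] ℝ)) (hl : LinearIndependent ℝ h)
    (c : Fin m → ℝ) : ∃ w, ∀ i, h i w = c i := by
  let T : (Fin n → ℝ) →ₗ[ℝ] (Fin m → ℝ) := LinearMap.pi fun i => (h i : (Fin n → ℝ) →ₗ[ℝ] ℝ)
  have hT : Function.Surjective T := by
    rw [← LinearMap.range_eq_top]
    by_contra hne
    obtain ⟨φ, hφ, hmap⟩ := Submodule.exists_dual_map_eq_bot_of_lt_top (lt_top_iff_ne_top.2 hne)
      inferInstance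
    apply hφ
    have hz : ∀ x, φ (T x) = 0 := fun x => by
      have : φ (T x) ∈ (LinearMap.range T).map φ := ⟨T x, ⟨x, rfl⟩, rfl⟩
      rw [hmap] at this
      simpa using this
    have hexp : ∀ v, φ v = ∑ i, v i * φ (Pi.single i 1) := fun v => by
      conv_lhs => rw [pi_eq_sum_univ' v]
      simp [map_sum, map_smul]
    have hs : ∑ i, φ (Pi.single i 1) • h i = 0 := by
      ext1 x
      have := hz x
      rw [hexp] at this
      simpa [T, mul_comm] using this
    have := Fintype.linearIndependent_iff.1 hl _ hs
    ext i
    simpa using this i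
  obtain ⟨w, hw⟩ := hT c
  exact ⟨w, fun i => congrFun hw i⟩

theorem motzkin {n m : ℕ} {ι : Type*} [Fintype ι] (a : ι → ((Fin n → ℝ) →L[ℝ] ℝ)) (b : ι → ℝ)
    (h : Fin m → ((Fin n → ℝ) →L[ℝ] ℝ)) (c : Fin m → ℝ) (hl : LinearIndependent ℝ h)
    (hno : ¬ ∃ w, (∀ i, h i w + c i = 0) ∧ ∀ j, a j w + b j < 0) :
    ∃ (mu : ι → ℝ) (lam : Fin m → ℝ), (∀ j, 0 ≤ mu j) ∧ mu ≠ 0 ∧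
      ∑ j, mu j • a j + ∑ i, lam i • h i = 0 ∧ 0 ≤ ∑ j, mu j * b j + ∑ i, lam i * c i := by
  classical
  obtain ⟨w0, hw0⟩ := dual_vecs h hl (fun i => - c i)
  let N : Set (ι → ℝ) := {y | ∀ j, y j < 0}
  let T : Set (ι → ℝ) := {y | ∃ k, (∀ i, h i k = 0) ∧ y = fun j => a j (w0 + k) + b j}
  have hNc : Convex ℝ N := by
    intro x hx y hy s t hs ht hst j
    have := hx j
    have := hy j
    simp only [Pi.add_apply, Pi.smul_apply, smul_eq_mul]
    rcases hs.eq_or_lt with rfl | hs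
    · have : t = 1 := by linarith
      subst this; simpa using hy j
    · nlinarith
  have hNo : IsOpen N := by
    have : N = ⋂ j, {y | y j < 0} := by ext; simp [N]
    rw [this]
    exact isOpen_iInter_of_finite fun j => isOpen_lt (continuous_apply j) continuous_const
  have hTc : Convex ℝ T := by
    rintro x ⟨k, hk, rfl⟩ y ⟨k', hk', rfl⟩ s t hs ht hst
    refine ⟨s • k + t • k', fun i => by simp [hk, hk'], ?_⟩
    ext j
    simp only [Pi.add_apply, Pi.smul_apply, smul_eq_mul, map_add, map_smul]
    have : t = 1 - s := by linarith
    subst this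
    ring
  have hdisj : Disjoint N T := by
    rw [Set.disjoint_left]
    rintro y hy ⟨k, hk, rfl⟩
    exact hno ⟨w0 + k, fun i => by simp [hk, hw0], hy⟩
  obtain ⟨φ, u, hφN, hφT⟩ := geometric_hahn_banach_open hNc hNo hTc hdisj
  have hexp : ∀ v, φ v = ∑ i, v i * φ (Pi.single i 1) := fun v => by
    conv_lhs => rw [pi_eq_sum_univ' v]
    simp [map_sum, map_smul]
  have hclos : ∀ y : ι → ℝ, (∀ j, y j ≤ 0) → φ y ≤ u := by
    intro y hy
    have hlim : Filter.Tendsto (fun ε : ℝ => φ (y + ε • (fun _ => (-1 : ℝ)))) (nhdsWithin 0 (Set.Ioi 0))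
        (nhds (φ y)) := by
      have : Continuous (fun ε : ℝ => φ (y + ε • (fun _ => (-1 : ℝ)))) := by fun_prop
      have h2 := this.tendsto 0
      simp only [zero_smul, add_zero] at h2
      exact h2.mono_left nhdsWithin_le_nhds
    refine le_of_tendsto hlim ?_
    filter_upwards [self_mem_nhdsWithin] with ε hε
    refine (hφN _ fun j => ?_).le
    have := hy j
    have : (0:ℝ) < ε := hε
    simp; linarith
  have hu : 0 ≤ u := by simpa using hclos 0 (by simp)
  have hT0 : u ≤ φ (fun j => a j w0 + b j) := hφT _ ⟨0, by simp, by simp⟩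
  have hmu : ∀ j, 0 ≤ φ (Pi.single j 1) := by
    intro j
    by_contra hcon
    push Not at hcon
    have h1 := hclos ((-( (u+1) / (-φ (Pi.single j 1)))) • Pi.single j 1) (fun i => by
      have : 0 ≤ (u+1) / (-φ (Pi.single j 1)) := div_nonneg (by linarith) (by linarith)
      by_cases hij : i = j
      · subst hij; simpa using this
      · simp [hij])
    rw [map_smul, smul_eq_mul] at h1
    have : -((u + 1) / -φ (Pi.single j 1)) * φ (Pi.single j 1) = u + 1 := by
      field_simp [hcon.ne]
    linarith
  have hker : ∀ k, (∀ i, h i k = 0) → φ (fun j => a j k) = 0 := by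
    intro k hk
    have hall : ∀ s : ℝ, u ≤ φ (fun j => a j w0 + b j) + s * φ (fun j => a j k) := by
      intro s
      have := hφT _ ⟨s • k, by simp [hk], rfl⟩
      have he : (fun j => a j (w0 + s • k) + b j) = (fun j => a j w0 + b j) + s • (fun j => a j k) := by
        ext j; simp; ring
      rw [he, map_add, map_smul] at this
      exact this
    by_contra hne
    have := hall ((u - 1 - φ (fun j => a j w0 + b j)) / φ (fun j => a j k))
    rw [div_mul_cancel₀ _ hne] at this
    linarith
  have hspan := mem_span_of_iInf_ker_le_ker (L := fun i => (h i : (Fin n → ℝ) →ₗ[ℝ] ℝ))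
    (K := ((∑ j, φ (Pi.single j 1) • a j : (Fin n → ℝ) →L[ℝ] ℝ) : (Fin n → ℝ) →ₗ[ℝ] ℝ)) (by
      intro k hk
      simp only [Submodule.mem_iInf, LinearMap.mem_ker] at hk
      have := hker k hk
      rw [hexp] at this
      simpa [mul_comm] using this)
  rw [Submodule.mem_span_range_iff_exists_fun] at hspan
  obtain ⟨l, hl'⟩ := hspan
  have hst : ∀ x, ∑ j, φ (Pi.single j 1) * a j x = ∑ i, l i * h i x := by
    intro x
    have := LinearMap.congr_fun hl' x
    simpa using this.symm
  refine ⟨fun j => φ (Pi.single j 1), fun i => - l i, hmu, ?_, ?_, ?_⟩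
  · intro h0
    have h1 := hφN (fun _ => -1) (fun j => by norm_num)
    have hz : ∀ v, φ v = 0 := fun v => by
      rw [hexp]
      exact Finset.sum_eq_zero fun i _ => by rw [congrFun h0 i]; simp
    rw [hz] at h1 hT0
    linarith
  · ext1 x
    have := hst x
    simp [this]
  · have h1 := hst w0
    have h2 : 0 ≤ φ (fun j => a j w0 + b j) := hu.trans hT0
    rw [hexp] at h2
    simp only [add_mul, Finset.sum_add_distrib] at h2
    simp only [hw0] at h1
    have e1 : ∑ j, a j w0 * φ (Pi.single j 1) = ∑ i, l i * -c i := by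
      rw [← h1]; exact Finset.sum_congr rfl fun _ _ => mul_comm _ _
    rw [e1] at h2
    have e2 : ∑ j, b j * φ (Pi.single j 1) = ∑ j, φ (Pi.single j 1) * b j :=
      Finset.sum_congr rfl fun _ _ => mul_comm _ _
    rw [e2] at h2
    simp only [mul_neg, neg_mul] at h2 ⊢
    linarith

theorem taylor_curve {n : ℕ} (φ : (Fin n → ℝ) → ℝ) (hφ : ContDiff ℝ 2 φ) (x d w : Fin n → ℝ) :
    (fun t : ℝ => φ (x + t • d + (t ^ 2 / 2) • w) - (φ x + t * fderiv ℝ φ x d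
      + t ^ 2 / 2 * (fderiv ℝ φ x w + fderiv ℝ (fderiv ℝ φ) x d d))) =o[nhds 0]
      fun t : ℝ => t ^ 2 := by
  let y : ℝ → (Fin n → ℝ) := fun t => x + t • d + (t ^ 2 / 2) • w
  have hy : ∀ t, HasDerivAt y (d + t • w) t := by
    intro t
    have h1 : HasDerivAt (fun t : ℝ => t • d) ((1:ℝ) • d) t := (hasDerivAt_id t).smul_const d
    have h2 : HasDerivAt (fun t : ℝ => (t ^ 2 / 2) • w) (t • w) t := by
      have : HasDerivAt (fun t : ℝ => t ^ 2 / 2) t t := by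
        have := (hasDerivAt_pow 2 t).div_const 2
        exact this.congr_deriv (by norm_num)
      exact this.smul_const w
    have := (h1.const_add x).add h2
    rw [one_smul] at this
    exact this
  have hyc : ContDiff ℝ 2 y := by fun_prop
  have hψ : ContDiff ℝ ((2 : ℕ) : WithTop ℕ∞) (φ ∘ y) := by exact_mod_cast hφ.comp hyc
  have hφd : Differentiable ℝ φ := hφ.differentiable (by norm_num)
  have hφ1 : ContDiff ℝ 1 (fderiv ℝ φ) := hφ.fderiv_right (by norm_num)
  have hφdd : Differentiable ℝ (fderiv ℝ φ) := hφ1.differentiable (by norm_num)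
  have d1 : deriv (φ ∘ y) = fun t => fderiv ℝ φ (y t) (d + t • w) := by
    ext t
    exact ((hφd (y t)).hasFDerivAt.comp_hasDerivAt t (hy t)).deriv
  have y0 : y 0 = x := by simp [y]
  have d2 : deriv (deriv (φ ∘ y)) 0 = fderiv ℝ φ x w + fderiv ℝ (fderiv ℝ φ) x d d := by
    rw [d1]
    have ha : HasDerivAt (fun t => fderiv ℝ φ (y t)) (fderiv ℝ (fderiv ℝ φ) (y 0) (d + (0:ℝ) • w)) 0 :=
      (hφdd (y 0)).hasFDerivAt.comp_hasDerivAt 0 (hy 0)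
    have hb : HasDerivAt (fun t : ℝ => d + t • w) ((1:ℝ) • w) 0 :=
      ((hasDerivAt_id (0:ℝ)).smul_const w).const_add d
    have := (ha.clm_apply hb).deriv
    rw [this, y0]
    simp [add_comm]
  have T := taylor_isLittleO_univ (x₀ := 0) hψ
  simp only [taylor_within_apply, Finset.sum_range_succ, Finset.sum_range_zero,
    iteratedDerivWithin_univ, sub_zero] at T
  have i2 : iteratedDeriv 2 (φ ∘ y) 0 = fderiv ℝ φ x w + fderiv ℝ (fderiv ℝ φ) x d d := by
    rw [← d2, iteratedDeriv_succ, iteratedDeriv_one]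
  have i1 : iteratedDeriv 1 (φ ∘ y) 0 = fderiv ℝ φ x d := by
    rw [iteratedDeriv_one, d1]; simp [y0]
  rw [i1, i2] at T
  refine T.congr_left fun t => ?_
  simp only [iteratedDeriv_zero, Function.comp_apply, y0, smul_eq_mul]
  simp only [y]
  norm_num [Nat.factorial]
  left
  ring

theorem solve_near {n m : ℕ} (h : Fin m → (Fin n → ℝ) → ℝ) (hh : ∀ i, ContDiff ℝ 2 (h i))
    (x : Fin n → ℝ) (hx : ∀ i, h i x = 0) (hs : ∀ c : Fin m → ℝ, ∃ w, ∀ i, fderiv ℝ (h i) x w = c i) :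
    ∃ K : ℝ, 0 < K ∧ ∀ᶠ y in nhds x, ∃ z, (∀ i, h i z = 0) ∧ ‖z - y‖ ≤ K * ‖fun i => h i y‖ := by
  let F : (Fin n → ℝ) → (Fin m → ℝ) := fun y i => h i y
  let F' : (Fin n → ℝ) →L[ℝ] (Fin m → ℝ) := ContinuousLinearMap.pi fun i => fderiv ℝ (h i) x
  have hF : HasStrictFDerivAt F F' x := by
    rw [hasStrictFDerivAt_pi']
    intro i
    exact (hh i).contDiffAt.hasStrictFDerivAt (by norm_num)
  have hsurj : F'.range = ⊤ := by
    rw [LinearMap.range_eq_top]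
    intro c
    obtain ⟨w, hw⟩ := hs c
    exact ⟨w, funext hw⟩
  let R := F'.nonlinearRightInverseOfSurjective hsurj
  have hRpos : 0 < R.nnnorm := F'.nonlinearRightInverseOfSurjective_nnnorm_pos hsurj
  obtain ⟨s, hsx, hap⟩ := hF.approximates_deriv_on_nhds (c := R.nnnorm⁻¹ / 2)
    (Or.inr (half_pos (inv_pos.2 hRpos)))
  have hRp : (0:ℝ) < R.nnnorm := hRpos
  refine ⟨2 * R.nnnorm, by positivity, ?_⟩
  obtain ⟨ε, hε, hball⟩ := Metric.mem_nhds_iff.1 hsx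
  have hFx : F x = 0 := funext hx
  have hcont : Filter.Tendsto (fun y => 2 * (R.nnnorm : ℝ) * ‖F y‖) (nhds x) (nhds 0) := by
    have := (hF.continuousAt.norm).const_mul (2 * (R.nnnorm : ℝ))
    have h2 := this.tendsto
    simpa [hFx] using h2
  filter_upwards [hcont.eventually (gt_mem_nhds (half_pos hε)), Metric.ball_mem_nhds x (half_pos hε)]
    with y hy1 hy2
  have hsub : Metric.closedBall y (2 * R.nnnorm * ‖F y‖) ⊆ s := by
    intro z hz
    apply hball
    rw [Metric.mem_closedBall] at hz
    rw [Metric.mem_ball] at hy2 ⊢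
    have := dist_triangle z y x
    linarith
  have hso := hap.surjOn_closedBall_of_nonlinearRightInverse R (by positivity) hsub
  have h0 : (0 : Fin m → ℝ) ∈ Metric.closedBall (F y)
      ((((R.nnnorm : NNReal) : ℝ)⁻¹ - ((R.nnnorm⁻¹ / 2 : NNReal) : ℝ)) * (2 * R.nnnorm * ‖F y‖)) := by
    rw [Metric.mem_closedBall, dist_zero_left]
    push_cast
    have : (((R.nnnorm : ℝ))⁻¹ - (R.nnnorm : ℝ)⁻¹ / 2) * (2 * R.nnnorm * ‖F y‖) = ‖F y‖ := by
      field_simp; ring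
    rw [this]
  obtain ⟨z, hz, hz0⟩ := hso h0
  exact ⟨z, fun i => congrFun hz0 i, by simpa [dist_eq_norm] using hz⟩

theorem arc {n m : ℕ} (h : Fin m → (Fin n → ℝ) → ℝ) (hh : ∀ i, ContDiff ℝ 2 (h i))
    (x d w : Fin n → ℝ) (hx : ∀ i, h i x = 0)
    (hs : ∀ c : Fin m → ℝ, ∃ w, ∀ i, fderiv ℝ (h i) x w = c i)
    (hd : ∀ i, fderiv ℝ (h i) x d = 0)
    (hw : ∀ i, fderiv ℝ (h i) x w + fderiv ℝ (fderiv ℝ (h i)) x d d = 0) :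
    ∃ z : ℝ → (Fin n → ℝ), (∀ᶠ t in nhds 0, ∀ i, h i (z t) = 0) ∧
      (fun t => z t - (x + t • d + (t ^ 2 / 2) • w)) =o[nhds 0] fun t : ℝ => t ^ 2 := by
  obtain ⟨K, hK, hev⟩ := solve_near h hh x hx hs
  let y : ℝ → (Fin n → ℝ) := fun t => x + t • d + (t ^ 2 / 2) • w
  have hyc : Continuous y := by fun_prop
  have hy0 : y 0 = x := by simp [y]
  have hev2 : ∀ᶠ t in nhds 0, ∃ z, (∀ i, h i z = 0) ∧ ‖z - y t‖ ≤ K * ‖fun i => h i (y t)‖ := by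
    have := hyc.tendsto 0
    rw [hy0] at this
    exact this.eventually hev
  have : ∀ t, ∃ z, (∃ z, (∀ i, h i z = 0) ∧ ‖z - y t‖ ≤ K * ‖fun i => h i (y t)‖) →
      ((∀ i, h i z = 0) ∧ ‖z - y t‖ ≤ K * ‖fun i => h i (y t)‖) := by
    intro t
    by_cases hc : ∃ z, (∀ i, h i z = 0) ∧ ‖z - y t‖ ≤ K * ‖fun i => h i (y t)‖
    · obtain ⟨z, hz⟩ := hc
      exact ⟨z, fun _ => hz⟩
    · exact ⟨0, fun hh => absurd hh hc⟩
  choose z hz using this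
  refine ⟨z, hev2.mono fun t ht => (hz t ht).1, ?_⟩
  have hH : (fun t => (fun i => h i (y t))) =o[nhds 0] fun t : ℝ => t ^ 2 := by
    rw [Asymptotics.isLittleO_pi]
    intro i
    refine (taylor_curve (h i) (hh i) x d w).congr_left fun t => ?_
    rw [hx, hd, hw]; simp [y]
  refine Asymptotics.IsBigO.trans_isLittleO ?_ hH
  refine Asymptotics.IsBigO.of_bound K (hev2.mono fun t ht => (hz t ht).2)

theorem taylor_arc {n : ℕ} (φ : (Fin n → ℝ) → ℝ) (hφ : ContDiff ℝ 2 φ) (x d w : Fin n → ℝ)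
    (z : ℝ → (Fin n → ℝ))
    (hz : (fun t => z t - (x + t • d + (t ^ 2 / 2) • w)) =o[nhds 0] fun t : ℝ => t ^ 2)
    (hd : fderiv ℝ φ x d = 0) (hw : fderiv ℝ φ x w + fderiv ℝ (fderiv ℝ φ) x d d < 0) :
    ∀ᶠ t in nhdsWithin 0 (Set.Ioi 0), φ (z t) < φ x := by
  let y : ℝ → (Fin n → ℝ) := fun t => x + t • d + (t ^ 2 / 2) • w
  have hyt : Filter.Tendsto y (nhds 0) (nhds x) := by
    have hyc : Continuous y := by fun_prop
    have := hyc.tendsto 0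
    simpa [y] using this
  have hsq : Filter.Tendsto (fun t : ℝ => t ^ 2) (nhds 0) (nhds 0) := by
    have : Continuous (fun t : ℝ => t ^ 2) := by fun_prop
    simpa using this.tendsto 0
  have hzt : Filter.Tendsto z (nhds 0) (nhds x) := by
    have h1 := (hz.isBigO.trans_tendsto hsq).add hyt
    simpa [y] using h1
  have hst : HasStrictFDerivAt φ (fderiv ℝ φ x) x := hφ.contDiffAt.hasStrictFDerivAt (by norm_num)
  have hO := hst.isBigO_sub.comp_tendsto (hzt.prodMk_nhds hyt)
  have h1 : (fun t => φ (z t) - φ (y t)) =o[nhds 0] fun t : ℝ => t ^ 2 :=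
    Asymptotics.IsBigO.trans_isLittleO hO hz
  have h2 := h1.add (taylor_curve φ hφ x d w)
  set A := fderiv ℝ φ x w + fderiv ℝ (fderiv ℝ φ) x d d with hA
  have h3 := h2.def (c := -A / 4) (by linarith)
  filter_upwards [h3.filter_mono nhdsWithin_le_nhds, self_mem_nhdsWithin] with t ht htp
  have htp' : (0:ℝ) < t := htp
  rw [hd] at ht
  have h4 := (le_abs_self _).trans ht
  rw [Real.norm_of_nonneg (by positivity)] at h4
  simp only [y] at h4
  have : 0 < t ^ 2 := by positivity
  nlinarith

theorem orth_inj {N : ℕ} (M : Matrix (Fin N) (Fin N) ℝ) (h0 : ∀ a, (fun i => M i a) ≠ 0)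
    (ho : ∀ a b, a ≠ b → ∑ i, M i a * M i b = 0) (v : Fin N → ℝ)
    (hv : ∀ i, ∑ b, M i b * v b = 0) : ∀ a, v a = 0 := by
  intro a
  have h1 : ∑ i, M i a * ∑ b, M i b * v b = 0 := by simp [hv]
  simp only [Finset.mul_sum] at h1
  rw [Finset.sum_comm] at h1
  have h2 : ∑ b, ∑ i, M i a * (M i b * v b) = v a * ∑ i, M i a * M i a := by
    rw [Finset.sum_eq_single a]
    · rw [Finset.mul_sum]; exact Finset.sum_congr rfl fun _ _ => by ring
    · intro b _ hb
      have := ho a b (Ne.symm hb)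
      calc _ = (∑ i, M i a * M i b) * v b := by
            rw [Finset.sum_mul]; exact Finset.sum_congr rfl fun _ _ => by ring
        _ = 0 := by rw [this, zero_mul]
    · simp
  rw [h2] at h1
  rcases mul_eq_zero.1 h1 with h | h
  · exact h
  · exfalso
    apply h0 a
    rw [Finset.sum_eq_zero_iff_of_nonneg (fun i _ => mul_self_nonneg _)] at h
    ext i
    simpa using h i (Finset.mem_univ i)

theorem rank_diag {N n r : ℕ} (S : Matrix (Fin N) (Fin n) ℝ) (hr : r ≤ S.rank)
    (hd : ∀ (i : Fin N) (k : Fin n), (i : ℕ) ≠ k → S i k = 0)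
    (hz : ∀ (i : Fin N) (k : Fin n), (i : ℕ) = k → r ≤ i → S i k = 0)
    (a : Fin N) (b : Fin n) (hab : (a : ℕ) = b) (har : (a : ℕ) < r) : S a b ≠ 0 := by
  classical
  intro h0
  let A : Finset (Fin N) := Finset.univ.filter fun i => (i : ℕ) < r ∧ i ≠ a
  have hrow : ∀ i, i ∉ A → ∀ k, S i k = 0 := by
    intro i hi k
    by_cases hik : (i : ℕ) = k
    · by_cases hir : r ≤ i
      · exact hz i k hik hir
      · have : i = a := by
          by_contra hne
          exact hi (by simp [A, hne]; omega)
        subst this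
        have : k = b := Fin.ext (by omega)
        rw [this, h0]
    · exact hd i k hik
  have hle : LinearMap.range S.mulVecLin ≤
      Submodule.span ℝ ((A.image fun i => (Pi.single i 1 : Fin N → ℝ) : Finset (Fin N → ℝ)) : Set (Fin N → ℝ)) := by
    rintro _ ⟨v, rfl⟩
    have : S.mulVecLin v = ∑ i ∈ A, (S *ᵥ v) i • (Pi.single i 1 : Fin N → ℝ) := by
      ext j
      rw [Finset.sum_apply]
      simp only [Pi.smul_apply, Pi.single_apply, smul_eq_mul, mul_ite, mul_one, mul_zero,
        Finset.sum_ite_eq, mulVecLin_apply]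
      split_ifs with hj
      · rfl
      · simp [Matrix.mulVec, dotProduct, hrow j hj]
    rw [this]
    refine Submodule.sum_mem _ fun i hi => Submodule.smul_mem _ _ (Submodule.subset_span ?_)
    exact Finset.mem_coe.2 (Finset.mem_image_of_mem _ hi)
  have h1 : S.rank ≤ A.card := by
    refine (Submodule.finrank_mono hle).trans ?_
    exact (finrank_span_finset_le_card _).trans Finset.card_image_le
  have h2 : A.card < r := by
    have hlt : A.card < (insert a A).card := by
      rw [Finset.card_insert_of_notMem (by simp [A])]; omega
    have hle2 : (insert a A).card ≤ (Finset.range r).card := by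
      refine Finset.card_le_card_of_injOn (fun i => (i : ℕ)) ?_ (fun x _ y _ h => Fin.ext h)
      intro i hi
      simp only [A, Finset.coe_insert, Set.mem_insert_iff, Finset.mem_coe, Finset.mem_filter,
        Finset.mem_univ, true_and] at hi
      simp only [Finset.coe_range, Set.mem_Iio]
      rcases hi with rfl | h
      · exact har
      · exact h.1
    rw [Finset.card_range] at hle2
    omega
  omega

theorem svd_abs {N n r : ℕ} (xs : Fin n → ℝ) (J : (Fin n → ℝ) → Matrix (Fin N) (Fin n) ℝ)
    (U : (Fin n → ℝ) → Matrix (Fin N) (Fin N) ℝ) (S : (Fin n → ℝ) → Matrix (Fin N) (Fin n) ℝ)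
    (V : (Fin n → ℝ) → Matrix (Fin n) (Fin n) ℝ)
    (hU : ∀ i j, DifferentiableAt ℝ (fun x => U x i j) xs)
    (hS : ∀ i j, DifferentiableAt ℝ (fun x => S x i j) xs)
    (hV : ∀ i j, DifferentiableAt ℝ (fun x => V x i j) xs)
    (hJ : ∀ᶠ x in nhds xs, ∀ i k, J x i k = (U x * S x * (V x)ᵀ) i k)
    (hd : ∀ᶠ x in nhds xs, ∀ (i : Fin N) (k : Fin n), (i : ℕ) ≠ k → S x i k = 0)
    (hz : ∀ᶠ x in nhds xs, ∀ (i : Fin N) (k : Fin n), (i : ℕ) = k → r + 1 ≤ i → S x i k = 0)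
    (hz0 : ∀ (i : Fin N) (k : Fin n), (i : ℕ) = k → r ≤ i → S xs i k = 0)
    (hr : (J xs).rank = r)
    (hU0 : ∀ a, (fun i => U xs i a) ≠ 0)
    (hUo : ∀ a b, a ≠ b → ∑ i, U xs i a * U xs i b = 0)
    (hV0 : ∀ a, (fun i => V xs i a) ≠ 0)
    (hVo : ∀ a b, a ≠ b → ∑ i, V xs i a * V xs i b = 0) :
    ∃ (τ : (Fin N → ℝ) →ₗ[ℝ] ℝ) (l1 l2 : (Fin n → ℝ) →ₗ[ℝ] ℝ),
      ∀ ω : Fin N → ℝ, (∀ k, ∑ i, ω i * J xs i k = 0) →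
      ∀ d : Fin n → ℝ, (∀ i, ∑ k, J xs i k * d k = 0) →
      ∀ J' : Fin N → ((Fin n → ℝ) →L[ℝ] ℝ),
        (∀ i, HasFDerivAt (fun x => ∑ k, J x i k * d k) (J' i) xs) →
        ∑ i, ω i * J' i d = τ ω * (l1 d * l2 d) := by
  classical
  have hJs : J xs = U xs * S xs * (V xs)ᵀ := by
    ext i k; exact hJ.self_of_nhds i k
  have hrS : r ≤ (S xs).rank := by
    rw [← hr, hJs]
    exact (Matrix.rank_mul_le_left _ _).trans (Matrix.rank_mul_le_right _ _)
  have hnz := rank_diag (S xs) hrS hd.self_of_nhds hz0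
  have main : ∀ ω : Fin N → ℝ, (∀ k, ∑ i, ω i * J xs i k = 0) →
      ∀ d : Fin n → ℝ, (∀ i, ∑ k, J xs i k * d k = 0) →
      ∀ J' : Fin N → ((Fin n → ℝ) →L[ℝ] ℝ),
        (∀ i, HasFDerivAt (fun x => ∑ k, J x i k * d k) (J' i) xs) →
        ∑ i, ω i * J' i d = ∑ a, ∑ b, (∑ i, ω i * U xs i a) *
          (fderiv ℝ (fun x => S x a b) xs d * ∑ k, V xs k b * d k) ∧
        ∀ (a : Fin N) (b : Fin n), ¬ ((a : ℕ) = r ∧ (b : ℕ) = r) →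
          fderiv ℝ (fun x => S x a b) xs d * ∑ k, V xs k b * d k = 0 := by
    intro ω hω d hdk J' hJ'
    let Y : Fin n → (Fin n → ℝ) → ℝ := fun b x => ∑ k, V x k b * d k
    have hYd : ∀ b, DifferentiableAt ℝ (Y b) xs := by
      intro b
      exact DifferentiableAt.fun_sum fun k _ => (hV k b).mul_const _
    have hexp : ∀ x, (∀ i k, J x i k = (U x * S x * (V x)ᵀ) i k) → ∀ i,
        ∑ k, J x i k * d k = ∑ a, ∑ b, U x i a * S x a b * Y b x := by
      intro x hx i
      simp only [hx, Matrix.mul_apply, Matrix.transpose_apply, Y, Finset.sum_mul, Finset.mul_sum]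
      rw [Finset.sum_comm]
      conv_rhs => rw [Finset.sum_comm]
      refine Finset.sum_congr rfl fun b _ => ?_
      rw [Finset.sum_comm]
      exact Finset.sum_congr rfl fun a _ => Finset.sum_congr rfl fun k _ => by ring
    have hSY0 : ∀ a, ∑ b, S xs a b * Y b xs = 0 := by
      apply orth_inj (U xs) hU0 hUo
      intro i
      rw [← hdk i, hexp xs hJ.self_of_nhds i]
      refine Finset.sum_congr rfl fun a _ => ?_
      rw [Finset.mul_sum]
      exact Finset.sum_congr rfl fun b _ => by ring
    have hSY : ∀ a b, S xs a b * Y b xs = 0 := by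
      intro a b
      by_cases hab : (a : ℕ) = b
      · rw [← hSY0 a, Finset.sum_eq_single b]
        · intro b' _ hb'
          rw [hd.self_of_nhds a b' (fun h => hb' (Fin.ext (by omega))), zero_mul]
        · simp
      · rw [hd.self_of_nhds a b hab, zero_mul]
    have hωUS : ∀ b, ∑ a, (∑ i, ω i * U xs i a) * S xs a b = 0 := by
      apply orth_inj (V xs) hV0 hVo
      intro k
      rw [← hω k, hJs]
      simp only [Matrix.mul_apply, Matrix.transpose_apply, Finset.sum_mul, Finset.mul_sum]
      conv_rhs => rw [Finset.sum_comm]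
      refine Finset.sum_congr rfl fun b _ => ?_
      rw [Finset.sum_comm]
      exact Finset.sum_congr rfl fun a _ => Finset.sum_congr rfl fun k _ => by ring
    have hder : ∀ i, J' i d = ∑ a, ∑ b, (U xs i a * S xs a b * fderiv ℝ (Y b) xs d +
        U xs i a * (fderiv ℝ (fun x => S x a b) xs d * Y b xs)) := by
      intro i
      have h1 : HasFDerivAt (fun x => ∑ a, ∑ b, U x i a * S x a b * Y b x) (∑ a, ∑ b,
          ((U xs i a * S xs a b) • fderiv ℝ (Y b) xs + (Y b xs) •
            (U xs i a • fderiv ℝ (fun x => S x a b) xs + S xs a b • fderiv ℝ (fun x => U x i a) xs))) xs :=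
        HasFDerivAt.fun_sum fun a _ => HasFDerivAt.fun_sum fun b _ =>
          ((hU i a).hasFDerivAt.mul (hS a b).hasFDerivAt).mul (hYd b).hasFDerivAt
      have h2 := (hJ' i).congr_of_eventuallyEq (f₁ := fun x => ∑ a, ∑ b, U x i a * S x a b * Y b x)
        (hJ.mono fun x hx => (hexp x hx i).symm)
      rw [h2.unique h1]
      simp only [_root_.sum_apply, _root_.add_apply,
        _root_.smul_apply, smul_eq_mul]
      refine Finset.sum_congr rfl fun a _ => Finset.sum_congr rfl fun b _ => ?_
      linear_combination (fderiv ℝ (fun x => U x i a) xs d) * hSY a b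
    constructor
    · simp only [hder, Finset.sum_add_distrib, mul_add]
      have e1 : ∑ i, ω i * ∑ a, ∑ b, U xs i a * S xs a b * fderiv ℝ (Y b) xs d = 0 := by
        have : ∑ i, ω i * ∑ a, ∑ b, U xs i a * S xs a b * fderiv ℝ (Y b) xs d
            = ∑ b, (∑ a, (∑ i, ω i * U xs i a) * S xs a b) * fderiv ℝ (Y b) xs d := by
          simp only [Finset.sum_mul, Finset.mul_sum]
          rw [Finset.sum_comm]
          conv_rhs => rw [Finset.sum_comm]
          refine Finset.sum_congr rfl fun a _ => ?_
          rw [Finset.sum_comm]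
          exact Finset.sum_congr rfl fun a _ => Finset.sum_congr rfl fun k _ => by ring
        rw [this]
        exact Finset.sum_eq_zero fun b _ => by rw [hωUS, zero_mul]
      rw [e1, zero_add]
      simp only [Y, Finset.sum_mul, Finset.mul_sum]
      rw [Finset.sum_comm]
      refine Finset.sum_congr rfl fun a _ => ?_
      rw [Finset.sum_comm]
      refine Finset.sum_congr rfl fun b _ => ?_
      conv_rhs => rw [Finset.sum_comm]
      exact Finset.sum_congr rfl fun a _ => Finset.sum_congr rfl fun k _ => by ring
    · intro a b hne
      have hzero : (∀ᶠ x in nhds xs, S x a b = 0) → fderiv ℝ (fun x => S x a b) xs d = 0 := by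
        intro h
        have : (fun x => S x a b) =ᶠ[nhds xs] fun _ => (0:ℝ) := h
        rw [this.fderiv_eq]
        simp
      by_cases hab : (a : ℕ) = b
      · by_cases har : r + 1 ≤ a
        · rw [hzero (hz.mono fun x hx => hx a b hab har), zero_mul]
        · have : Y b xs = 0 := by
            rcases mul_eq_zero.1 (hSY a b) with h | h
            · exact absurd h (hnz a b hab (by omega))
            · exact h
          show _ * Y b xs = 0
          rw [this, mul_zero]
      · rw [hzero (hd.mono fun x hx => hx a b hab), zero_mul]
  by_cases hc : r < N ∧ r < n
  · let a0 : Fin N := ⟨r, hc.1⟩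
    let b0 : Fin n := ⟨r, hc.2⟩
    refine ⟨∑ i, (U xs i a0) • LinearMap.proj i,
      (fderiv ℝ (fun x => S x a0 b0) xs : (Fin n → ℝ) →ₗ[ℝ] ℝ),
      ∑ k, (V xs k b0) • LinearMap.proj k, fun ω hω d hdk J' hJ' => ?_⟩
    obtain ⟨h1, h2⟩ := main ω hω d hdk J' hJ'
    rw [h1, Finset.sum_eq_single a0, Finset.sum_eq_single b0]
    · simp [mul_comm]
    · intro b _ hb
      rw [h2 a0 b (fun h => hb (Fin.ext h.2)), mul_zero]
    · simp
    · intro a _ ha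
      exact Finset.sum_eq_zero fun b _ => by
        rw [h2 a b (fun h => ha (Fin.ext h.1)), mul_zero]
    · simp
  · refine ⟨0, 0, 0, fun ω hω d hdk J' hJ' => ?_⟩
    obtain ⟨h1, h2⟩ := main ω hω d hdk J' hJ'
    rw [h1]
    simp only [LinearMap.zero_apply, mul_zero]
    refine Finset.sum_eq_zero fun a _ => Finset.sum_eq_zero fun b _ => ?_
    rw [h2 a b (fun h => hc ⟨by omega, by omega⟩), mul_zero]

theorem sum_sub {p : ℕ} (P : Fin p → Prop) [Fintype {j // P j}] (q : Fin p → ℝ)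
    (hq : ∀ j, ¬ P j → q j = 0) : ∑ j : {j // P j}, q j.1 = ∑ j, q j :=
  Fintype.sum_of_injective Subtype.val Subtype.val_injective _ _
    (fun j hj => hq j fun h => hj ⟨⟨j, h⟩, rfl⟩) (fun _ => rfl)

theorem lagr_fderiv {n m p : ℕ} (f : (Fin n → ℝ) → ℝ) (h : Fin m → (Fin n → ℝ) → ℝ)
    (g : Fin p → (Fin n → ℝ) → ℝ)
    (hf : ContDiff ℝ 2 f) (hh : ∀ i, ContDiff ℝ 2 (h i)) (hg : ∀ j, ContDiff ℝ 2 (g j))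
    (lam : Fin m → ℝ) (mu : Fin p → ℝ) (x : Fin n → ℝ) :
    fderiv ℝ (Lagr f h g lam mu) x = fderiv ℝ f x + ∑ i, lam i • fderiv ℝ (h i) x
      + ∑ j, mu j • fderiv ℝ (g j) x := by
  have df := (hf.differentiable (by norm_num) x).hasFDerivAt
  have dh := fun i => ((hh i).differentiable (by norm_num) x).hasFDerivAt
  have dg := fun i => ((hg i).differentiable (by norm_num) x).hasFDerivAt
  exact ((df.add (HasFDerivAt.fun_sum fun i _ => (dh i).const_mul (lam i))).add
    (HasFDerivAt.fun_sum fun j _ => (dg j).const_mul (mu j))).fderiv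

theorem lagr_hess {n m p : ℕ} (f : (Fin n → ℝ) → ℝ) (h : Fin m → (Fin n → ℝ) → ℝ)
    (g : Fin p → (Fin n → ℝ) → ℝ)
    (hf : ContDiff ℝ 2 f) (hh : ∀ i, ContDiff ℝ 2 (h i)) (hg : ∀ j, ContDiff ℝ 2 (g j))
    (lam : Fin m → ℝ) (mu : Fin p → ℝ) (x d : Fin n → ℝ) :
    hessQ (Lagr f h g lam mu) x d = fderiv ℝ (fderiv ℝ f) x d d
      + ∑ i, lam i * fderiv ℝ (fderiv ℝ (h i)) x d d
      + ∑ j, mu j * fderiv ℝ (fderiv ℝ (g j)) x d d := by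
  have D : ∀ φ : (Fin n → ℝ) → ℝ, ContDiff ℝ 2 φ →
      HasFDerivAt (fderiv ℝ φ) (fderiv ℝ (fderiv ℝ φ) x) x := fun φ hφ => by
    have hφ1 : ContDiff ℝ 1 (fderiv ℝ φ) := hφ.fderiv_right (by norm_num)
    exact (hφ1.differentiable (by norm_num) x).hasFDerivAt
  have e1 : fderiv ℝ (Lagr f h g lam mu) = fun x => fderiv ℝ f x + ∑ i, lam i • fderiv ℝ (h i) x
      + ∑ j, mu j • fderiv ℝ (g j) x := funext fun x => lagr_fderiv f h g hf hh hg lam mu x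
  have e2 := (((D f hf).add (HasFDerivAt.fun_sum (u := Finset.univ) fun i _ =>
    (D (h i) (hh i)).const_smul (lam i))).add
    (HasFDerivAt.fun_sum (u := Finset.univ) fun j _ => (D (g j) (hg j)).const_smul (mu j))).fderiv
  unfold hessQ
  rw [iteratedFDeriv_two_apply, e1]
  refine (congrArg (fun A : (Fin n → ℝ) →L[ℝ] ((Fin n → ℝ) →L[ℝ] ℝ) => A d d) e2).trans ?_
  simp

theorem lag_stat {n m p : ℕ} (f : (Fin n → ℝ) → ℝ) (h : Fin m → (Fin n → ℝ) → ℝ)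
    (g : Fin p → (Fin n → ℝ) → ℝ)
    (hf : ContDiff ℝ 2 f) (hh : ∀ i, ContDiff ℝ 2 (h i)) (hg : ∀ j, ContDiff ℝ 2 (g j))
    (lam : Fin m → ℝ) (mu : Fin p → ℝ) (xs : Fin n → ℝ) (hl : IsLagMult f h g xs lam mu)
    (w : Fin n → ℝ) :
    fderiv ℝ f xs w + ∑ i, lam i * fderiv ℝ (h i) xs w + ∑ j, mu j * fderiv ℝ (g j) xs w = 0 := by
  have := hl.2.1
  rw [lagr_fderiv f h g hf hh hg] at this
  simpa using congrArg (fun A : (Fin n → ℝ) →L[ℝ] ℝ => A w) this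

theorem sonc {n m p : ℕ} (f : (Fin n → ℝ) → ℝ) (h : Fin m → (Fin n → ℝ) → ℝ)
    (g : Fin p → (Fin n → ℝ) → ℝ)
    (hf : ContDiff ℝ 2 f) (hh : ∀ i, ContDiff ℝ 2 (h i)) (hg : ∀ j, ContDiff ℝ 2 (g j))
    (xs : Fin n → ℝ) (hfeas : Feas h g xs)
    (hmin : IsLocalMinOn f {x | Feas h g x} xs)
    (hmfcq : MFCQ h g xs) (d : Fin n → ℝ) (hd : critSub h g xs d) (hfd : fderiv ℝ f xs d = 0) :
    ∃ (lam : Fin m → ℝ) (mu : Fin p → ℝ), IsLagMult f h g xs lam mu ∧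
      0 ≤ hessQ (Lagr f h g lam mu) xs d := by
  classical
  let a : Option {j : Fin p // g j xs = 0} → ((Fin n → ℝ) →L[ℝ] ℝ) := fun o =>
    o.elim (fderiv ℝ f xs) (fun j => fderiv ℝ (g j.1) xs)
  let b : Option {j : Fin p // g j xs = 0} → ℝ := fun o =>
    o.elim (fderiv ℝ (fderiv ℝ f) xs d d) (fun j => fderiv ℝ (fderiv ℝ (g j.1)) xs d d)
  have hno : ¬ ∃ w, (∀ i, fderiv ℝ (h i) xs w + fderiv ℝ (fderiv ℝ (h i)) xs d d = 0) ∧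
      ∀ o, a o w + b o < 0 := by
    rintro ⟨w, hw, ho⟩
    obtain ⟨z, hz1, hz2⟩ := arc h hh xs d w hfeas.1 (dual_vecs _ hmfcq.1) hd.1 hw
    have hyt : Filter.Tendsto (fun t : ℝ => xs + t • d + (t ^ 2 / 2) • w) (nhds 0) (nhds xs) := by
      have hyc : Continuous (fun t : ℝ => xs + t • d + (t ^ 2 / 2) • w) := by fun_prop
      have := hyc.tendsto 0
      simpa using this
    have hsq : Filter.Tendsto (fun t : ℝ => t ^ 2) (nhds 0) (nhds 0) := by
      have : Continuous (fun t : ℝ => t ^ 2) := by fun_prop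
      simpa using this.tendsto 0
    have hzt : Filter.Tendsto z (nhds 0) (nhds xs) := by
      have h1 := (hz2.isBigO.trans_tendsto hsq).add hyt
      simpa using h1
    have hfl := taylor_arc f hf xs d w z hz2 hfd (ho none)
    have hgl : ∀ᶠ t in nhdsWithin (0:ℝ) (Set.Ioi 0), ∀ j, g j (z t) ≤ 0 := by
      rw [Filter.eventually_all]
      intro j
      by_cases hj : g j xs = 0
      · have := taylor_arc (g j) (hg j) xs d w z hz2 (hd.2 j hj) (ho (some ⟨j, hj⟩))
        rw [hj] at this
        exact this.mono fun t ht => ht.le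
      · have hlt : g j xs < 0 := lt_of_le_of_ne (hfeas.2 j) hj
        have hc := ((hg j).continuous.tendsto xs).comp hzt
        exact ((hc.eventually (gt_mem_nhds hlt)).mono fun t ht => le_of_lt ht).filter_mono
          nhdsWithin_le_nhds
    have hm : ∀ᶠ x in nhds xs, x ∈ {x | Feas h g x} → f xs ≤ f x :=
      eventually_nhdsWithin_iff.1 hmin
    have hm2 := (hzt.eventually hm).filter_mono (nhdsWithin_le_nhds (s := Set.Ioi (0:ℝ)))
    obtain ⟨t, h1, h2, h3, h4⟩ := (hfl.and (hgl.and (hm2.and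
      (hz1.filter_mono nhdsWithin_le_nhds)))).exists
    exact absurd (h3 ⟨h4, h2⟩) (not_le.2 h1)
  obtain ⟨mu, lam, hmu, hne, hst, hso⟩ := motzkin a b _ _ hmfcq.1 hno
  have hst' : ∀ x, mu none * fderiv ℝ f xs x + ∑ j : {j : Fin p // g j xs = 0},
      mu (some j) * fderiv ℝ (g j.1) xs x + ∑ i, lam i * fderiv ℝ (h i) xs x = 0 := by
    intro x
    have := congrArg (fun A : (Fin n → ℝ) →L[ℝ] ℝ => A x) hst
    simpa [Fintype.sum_option, a] using this
  rw [Fintype.sum_option] at hso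
  change 0 ≤ mu none * fderiv ℝ (fderiv ℝ f) xs d d + ∑ j : {j : Fin p // g j xs = 0},
    mu (some j) * fderiv ℝ (fderiv ℝ (g j.1)) xs d d + _ at hso
  have hpos : 0 < mu none := by
    refine lt_of_le_of_ne (hmu none) fun h0 => hne ?_
    obtain ⟨-, v, hv1, hv2⟩ := hmfcq
    have h1 := hst' v
    rw [← h0] at h1
    simp only [hv1, mul_zero, Finset.sum_const_zero, zero_mul, zero_add, add_zero] at h1
    rw [Finset.sum_eq_zero_iff_of_nonpos (fun j _ =>
      mul_nonpos_of_nonneg_of_nonpos (hmu _) (hv2 j.1 j.2).le)] at h1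
    ext o
    cases o with
    | none => exact h0.symm
    | some j =>
      rcases mul_eq_zero.1 (h1 j (Finset.mem_univ _)) with h | h
      · exact h
      · exact absurd h (hv2 j.1 j.2).ne
  let mu' : Fin p → ℝ := fun j => if hj : g j xs = 0 then mu (some ⟨j, hj⟩) / mu none else 0
  let lam' : Fin m → ℝ := fun i => lam i / mu none
  have hmu' : ∀ X : Fin p → ℝ, ∑ j, mu' j * X j =
      (∑ j : {j : Fin p // g j xs = 0}, mu (some j) * X j.1) / mu none := by
    intro X
    rw [← sum_sub (fun j => g j xs = 0) (fun j => mu' j * X j) (fun j hj => by simp [mu', hj]),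
      Finset.sum_div]
    refine Finset.sum_congr rfl fun j _ => ?_
    simp only [mu', dif_pos j.2]
    ring
  have hlam' : ∀ X : Fin m → ℝ, ∑ j, lam' j * X j = (∑ j, lam j * X j) / mu none := by
    intro X
    rw [Finset.sum_div]
    exact Finset.sum_congr rfl fun j _ => by simp only [lam']; ring
  refine ⟨lam', mu', ⟨fun j => ?_, ?_, fun j => ?_⟩, ?_⟩
  · simp only [mu']
    split_ifs
    · exact div_nonneg (hmu _) (hmu _)
    · exact le_rfl
  · rw [lagr_fderiv f h g hf hh hg]
    ext1 x
    have h1 := hst' x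
    simp only [_root_.sum_apply, _root_.add_apply, _root_.smul_apply, smul_eq_mul, hmu', hlam',
      _root_.zero_apply]
    field_simp
    linarith
  · simp only [mu']
    split_ifs with hj
    · rw [hj, mul_zero]
    · rw [zero_mul]
  · rw [lagr_hess f h g hf hh hg, hmu', hlam']
    have : 0 ≤ (mu none * fderiv ℝ (fderiv ℝ f) xs d d + ∑ j : {j : Fin p // g j xs = 0},
      mu (some j) * fderiv ℝ (fderiv ℝ (g j.1)) xs d d +
        ∑ i, lam i * fderiv ℝ (fderiv ℝ (h i)) xs d d) / mu none := div_nonneg hso hpos.le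
    rw [add_div, add_div, mul_div_cancel_left₀ _ hpos.ne'] at this
    linarith

theorem lag_compact {n m p : ℕ} (f : (Fin n → ℝ) → ℝ) (h : Fin m → (Fin n → ℝ) → ℝ)
    (g : Fin p → (Fin n → ℝ) → ℝ)
    (hf : ContDiff ℝ 2 f) (hh : ∀ i, ContDiff ℝ 2 (h i)) (hg : ∀ j, ContDiff ℝ 2 (g j))
    (xs : Fin n → ℝ) (hmfcq : MFCQ h g xs) :
    IsCompact {ν : (Fin m → ℝ) × (Fin p → ℝ) | IsLagMult f h g xs ν.1 ν.2} ∧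
    Convex ℝ {ν : (Fin m → ℝ) × (Fin p → ℝ) | IsLagMult f h g xs ν.1 ν.2} := by
  classical
  constructor
  · have hclosed : IsClosed {ν : (Fin m → ℝ) × (Fin p → ℝ) | IsLagMult f h g xs ν.1 ν.2} := by
      simp only [IsLagMult, lagr_fderiv f h g hf hh hg, Set.ofPred_and, Set.ofPred_forall]
      refine IsClosed.inter (isClosed_iInter fun j => isClosed_le (by fun_prop) (by fun_prop))
        (IsClosed.inter (isClosed_eq (by fun_prop) (by fun_prop))
          (isClosed_iInter fun j => isClosed_eq (by fun_prop) (by fun_prop)))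
    obtain ⟨hli, v, hv1, hv2⟩ := hmfcq
    choose w hw using fun k : Fin m => dual_vecs _ hli (Pi.single k 1)
    let B : Fin p → ℝ := fun j => if g j xs = 0 then fderiv ℝ f xs v / (-fderiv ℝ (g j) xs v) else 0
    let C : Fin m → ℝ := fun k => |fderiv ℝ f xs (w k)| + ∑ j, B j * |fderiv ℝ (g j) xs (w k)|
    refine (isCompact_Icc (a := ((fun k => -C k, 0) : (Fin m → ℝ) × (Fin p → ℝ)))
      (b := (C, B))).of_isClosed_subset hclosed ?_
    rintro ⟨lam, mu⟩ hν
    have hν' : IsLagMult f h g xs lam mu := hν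
    have hz : ∀ j, g j xs ≠ 0 → mu j = 0 := fun j hj =>
      (mul_eq_zero.1 (hν'.2.2 j)).resolve_right hj
    have hB : ∀ j, mu j ≤ B j := by
      intro j
      by_cases hj : g j xs = 0
      · simp only [B, if_pos hj]
        have hneg := hv2 j hj
        rw [le_div_iff₀ (by linarith)]
        have hs := lag_stat f h g hf hh hg lam mu xs hν' v
        simp only [hv1, mul_zero, Finset.sum_const_zero, add_zero] at hs
        have h1 : mu j * -fderiv ℝ (g j) xs v ≤ ∑ j, mu j * -fderiv ℝ (g j) xs v := by
          refine Finset.single_le_sum (f := fun j => mu j * -fderiv ℝ (g j) xs v) (fun i _ => ?_)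
            (Finset.mem_univ j)
          by_cases hi : g i xs = 0
          · exact mul_nonneg (hν'.1 i) (by linarith [hv2 i hi])
          · simp [hz i hi]
        simp only [mul_neg, Finset.sum_neg_distrib] at h1 ⊢
        linarith
      · simp [B, hj, hz j hj]
    have hC : ∀ k, |lam k| ≤ C k := by
      intro k
      have hs := lag_stat f h g hf hh hg lam mu xs hν' (w k)
      simp only [hw, Pi.single_apply, mul_ite, mul_one, mul_zero, Finset.sum_ite_eq',
        Finset.sum_ite_eq, Finset.mem_univ, if_true] at hs
      have h1 : lam k = -(fderiv ℝ f xs (w k) + ∑ j, mu j * fderiv ℝ (g j) xs (w k)) := by linarith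
      rw [h1, abs_neg]
      refine (abs_add_le _ _).trans (add_le_add le_rfl ((Finset.abs_sum_le_sum_abs _ _).trans
        (Finset.sum_le_sum fun j _ => ?_)))
      rw [abs_mul, abs_of_nonneg (hν'.1 j)]
      exact mul_le_mul_of_nonneg_right (hB j) (abs_nonneg _)
    exact ⟨⟨fun k => (abs_le.1 (hC k)).1, hν'.1⟩, ⟨fun k => (abs_le.1 (hC k)).2, hB⟩⟩
  · rintro ⟨l1, m1⟩ h1 ⟨l2, m2⟩ h2 s t hs ht hst
    have h1' : IsLagMult f h g xs l1 m1 := h1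
    have h2' : IsLagMult f h g xs l2 m2 := h2
    refine ⟨fun j => ?_, ?_, fun j => ?_⟩
    · exact add_nonneg (mul_nonneg hs (h1'.1 j)) (mul_nonneg ht (h2'.1 j))
    · rw [lagr_fderiv f h g hf hh hg]
      ext1 x
      have e1 := lag_stat f h g hf hh hg l1 m1 xs h1' x
      have e2 := lag_stat f h g hf hh hg l2 m2 xs h2' x
      simp only [Prod.smul_mk, Prod.mk_add_mk, _root_.sum_apply, _root_.add_apply,
        _root_.smul_apply, smul_eq_mul, Pi.add_apply, Pi.smul_apply, add_mul, mul_assoc,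
        Finset.sum_add_distrib, ← Finset.mul_sum, _root_.zero_apply]
      have : t = 1 - s := by linarith
      subst this
      linear_combination s * e1 + (1 - s) * e2
    · have e1 := h1'.2.2 j
      have e2 := h2'.2.2 j
      show (s * m1 j + t * m2 j) * g j xs = 0
      linear_combination s * e1 + t * e2

theorem svd_form {n m p : ℕ} (h : Fin m → (Fin n → ℝ) → ℝ)
    (g : Fin p → (Fin n → ℝ) → ℝ)
    (hh : ∀ i, ContDiff ℝ 2 (h i)) (hg : ∀ j, ContDiff ℝ 2 (g j))
    (xs : Fin n → ℝ)
    (hrank : ∀ᶠ x in nhds xs, (Jac h g xs x).rank ≤ (Jac h g xs xs).rank + 1)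
    (e : (Fin m ⊕ {j : Fin p // g j xs = 0}) ≃
      Fin (m + Fintype.card {j : Fin p // g j xs = 0}))
    (hsvd : SmoothSVD h g xs e) :
    ∃ (T : ((Fin m → ℝ) × (Fin p → ℝ)) →ₗ[ℝ] ℝ) (l1 l2 : (Fin n → ℝ) →ₗ[ℝ] ℝ),
      ∀ lam mu, (∀ j, g j xs ≠ 0 → mu j = 0) →
        (∀ w, ∑ i, lam i * fderiv ℝ (h i) xs w + ∑ j, mu j * fderiv ℝ (g j) xs w = 0) →
        ∀ d, critSub h g xs d →
          ∑ i, lam i * fderiv ℝ (fderiv ℝ (h i)) xs d d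
            + ∑ j, mu j * fderiv ℝ (fderiv ℝ (g j)) xs d d = T (lam, mu) * (l1 d * l2 d) := by
  obtain ⟨O, hO, U, S, V, hU, hS, hV, hJ, hd, hz, hU0, hUo, hV0, hVo⟩ := hsvd
  let c : (Fin m ⊕ {j : Fin p // g j xs = 0}) → (Fin n → ℝ) → ℝ := Sum.elim h (fun j => g j.1)
  have hc : ∀ i, ContDiff ℝ 2 (c i) := by
    rintro (i | j)
    · exact hh i
    · exact hg j.1
  have hJc : ∀ x i k, Jac h g xs x i k = fderiv ℝ (c i) x (Pi.single k 1) := by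
    rintro x (i | j) k <;> rfl
  obtain ⟨τ, l1, l2, H⟩ := svd_abs (r := (Jac h g xs xs).rank) xs
    (fun x => (Jac h g xs x).submatrix e.symm (Equiv.refl _)) U S V
    (fun i j => (hU i j).differentiableAt hO) (fun i j => (hS i j).differentiableAt hO)
    (fun i j => (hV i j).differentiableAt hO)
    (by filter_upwards [hO] with x hx using hJ x hx)
    (by filter_upwards [hO] with x hx using hd x hx)
    (by filter_upwards [hO, hrank] with x hx hx2 i k hik hi using hz x hx i k hik (hx2.trans hi))
    (hz xs (mem_of_mem_nhds hO))
    (Matrix.rank_submatrix _ _ _) hU0 hUo hV0 hVo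
  have hsum : ∀ F : (Fin m ⊕ {j : Fin p // g j xs = 0}) → ℝ,
      ∑ i, F (e.symm i) = ∑ i, F (Sum.inl i) + ∑ j, F (Sum.inr j) := by
    intro F
    rw [Equiv.sum_comp e.symm F, Fintype.sum_sum_type]
  let P : ((Fin m → ℝ) × (Fin p → ℝ)) →ₗ[ℝ]
      (Fin (m + Fintype.card {j : Fin p // g j xs = 0}) → ℝ) :=
    { toFun := fun ν i => Sum.elim ν.1 (fun j => ν.2 j.1) (e.symm i)
      map_add' := by
        intro ν ν'
        ext i
        simp only [Pi.add_apply]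
        rcases e.symm i with i | j <;> rfl
      map_smul' := by
        intro s ν
        ext i
        simp only [Pi.smul_apply]
        rcases e.symm i with i | j <;> rfl }
  refine ⟨τ ∘ₗ P, l1, l2, fun lam mu hmu hst d hcrit => ?_⟩
  have hlin : ∀ x i, ∑ k, Jac h g xs x i k * d k = fderiv ℝ (c i) x d := by
    intro x i
    conv_rhs => rw [pi_eq_sum_univ' d]
    simp [hJc, map_sum, map_smul, mul_comm]
  have hred : ∀ X : (Fin m ⊕ {j : Fin p // g j xs = 0}) → ℝ, ∀ Y : Fin p → ℝ,
      (∀ j, X (Sum.inr j) = Y j.1) →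
      ∑ i, P (lam, mu) i * X (e.symm i) = ∑ i, lam i * X (Sum.inl i) + ∑ j, mu j * Y j := by
    intro X Y hXY
    have := hsum (fun i => Sum.elim lam (fun j => mu j.1) i * X i)
    refine this.trans ?_
    congr 1
    rw [← sum_sub (fun j => g j xs = 0) (fun j => mu j * Y j) (fun j hj => by simp [hmu j hj])]
    exact Finset.sum_congr rfl fun j _ => by simp [hXY]
  have key := H (P (lam, mu)) (fun k => by
      have := hred (fun i => Jac h g xs xs i k) (fun j => fderiv ℝ (g j) xs (Pi.single k 1))
        (fun j => rfl)
      exact this.trans (hst (Pi.single k 1)))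
    d (fun i => by
      refine (hlin xs (e.symm i)).trans ?_
      rcases e.symm i with i | j
      · exact hcrit.1 i
      · exact hcrit.2 j.1 j.2)
    (fun i => (fderiv ℝ (fderiv ℝ (c (e.symm i))) xs).flip d) (fun i => by
      have hφ1 : ContDiff ℝ 1 (fderiv ℝ (c (e.symm i))) := (hc _).fderiv_right (by norm_num)
      have h1 := (hφ1.differentiable (by norm_num) xs).hasFDerivAt.clm_apply
        (hasFDerivAt_const d xs)
      have h2 : (fun x => ∑ k, ((Jac h g xs x).submatrix e.symm (Equiv.refl _)) i k * d k)
          = fun x => fderiv ℝ (c (e.symm i)) x d := funext fun x => hlin x (e.symm i)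
      rw [h2]
      refine h1.congr_fderiv ?_
      ext1 w
      simp)
  refine Eq.trans ?_ key
  exact (hred (fun i => fderiv ℝ (fderiv ℝ (c i)) xs d d)
    (fun j => fderiv ℝ (fderiv ℝ (g j)) xs d d) (fun j => rfl)).symm

/-- Main theorem: MFCQ, rank of `J(x)` at most `r + 1` near `xs`
(`r` the rank of `J(xs)`), and the smooth SVD assumption imply WSOC at a local minimizer. -/
theorem stmt10 {n m p : ℕ} (f : (Fin n → ℝ) → ℝ) (h : Fin m → (Fin n → ℝ) → ℝ)
    (g : Fin p → (Fin n → ℝ) → ℝ)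
    (hf : ContDiff ℝ 2 f) (hh : ∀ i, ContDiff ℝ 2 (h i)) (hg : ∀ j, ContDiff ℝ 2 (g j))
    (xs : Fin n → ℝ) (hfeas : Feas h g xs)
    (hmin : IsLocalMinOn f {x | Feas h g x} xs)
    (hmfcq : MFCQ h g xs)
    (hrank : ∀ᶠ x in nhds xs, (Jac h g xs x).rank ≤ (Jac h g xs xs).rank + 1)
    (e : (Fin m ⊕ {j : Fin p // g j xs = 0}) ≃
      Fin (m + Fintype.card {j : Fin p // g j xs = 0}))
    (hsvd : SmoothSVD h g xs e) :
    ∃ (lam : Fin m → ℝ) (mu : Fin p → ℝ), IsLagMult f h g xs lam mu ∧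
      ∀ d, critSub h g xs d → 0 ≤ hessQ (Lagr f h g lam mu) xs d := by
  classical
  have hcs0 : critSub h g xs 0 := ⟨fun i => by simp, fun j _ => by simp⟩
  obtain ⟨lam0, mu0, hl0, -⟩ := sonc f h g hf hh hg xs hfeas hmin hmfcq 0 hcs0 (by simp)
  have hz : ∀ lam mu, IsLagMult f h g xs lam mu → ∀ j, g j xs ≠ 0 → mu j = 0 :=
    fun lam mu hl j hj => (mul_eq_zero.1 (hl.2.2 j)).resolve_right hj
  have hfd : ∀ d, critSub h g xs d → fderiv ℝ f xs d = 0 := by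
    intro d hd
    have := lag_stat f h g hf hh hg lam0 mu0 xs hl0 d
    have e2 : ∑ j, mu0 j * fderiv ℝ (g j) xs d = 0 := Finset.sum_eq_zero fun j _ => by
      by_cases hj : g j xs = 0
      · rw [hd.2 j hj, mul_zero]
      · rw [hz _ _ hl0 j hj, zero_mul]
    simpa [hd.1, e2] using this
  obtain ⟨T, l1, l2, hT⟩ := svd_form h g hh hg xs hrank e hsvd
  obtain ⟨hKc, hKv⟩ := lag_compact f h g hf hh hg xs hmfcq
  set K := {ν : (Fin m → ℝ) × (Fin p → ℝ) | IsLagMult f h g xs ν.1 ν.2} with hK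
  have h0K : (lam0, mu0) ∈ K := hl0
  have hTc : Continuous T := T.continuous_of_finiteDimensional
  have hdiff : ∀ ν ∈ K, ∀ d, critSub h g xs d → hessQ (Lagr f h g ν.1 ν.2) xs d =
      hessQ (Lagr f h g lam0 mu0) xs d + (T ν - T (lam0, mu0)) * (l1 d * l2 d) := by
    rintro ⟨lam, mu⟩ hν d hd
    have hν' : IsLagMult f h g xs lam mu := hν
    have := hT (lam - lam0) (mu - mu0)
      (fun j hj => by simp [hz _ _ hν' j hj, hz _ _ hl0 j hj])
      (fun w => by
        have e1 := lag_stat f h g hf hh hg lam mu xs hν' w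
        have e2 := lag_stat f h g hf hh hg lam0 mu0 xs hl0 w
        simp only [Pi.sub_apply, sub_mul, Finset.sum_sub_distrib]
        linarith) d hd
    have hTs : T (lam - lam0, mu - mu0) = T (lam, mu) - T (lam0, mu0) := by
      rw [← map_sub]; rfl
    rw [hTs] at this
    simp only [Pi.sub_apply, sub_mul (_ : ℝ), Finset.sum_sub_distrib] at this
    rw [lagr_hess f h g hf hh hg, lagr_hess f h g hf hh hg]
    simp only
    linarith
  obtain ⟨ν1, hν1, hmin1⟩ := hKc.exists_isMinOn ⟨_, h0K⟩ hTc.continuousOn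
  obtain ⟨ν2, hν2, hmax2⟩ := hKc.exists_isMaxOn ⟨_, h0K⟩ hTc.continuousOn
  let W : Submodule ℝ (Fin n → ℝ) :=
    { carrier := {d | critSub h g xs d}
      zero_mem' := hcs0
      add_mem' := fun {a b} ha hb => ⟨fun i => by simp [ha.1 i, hb.1 i],
        fun j hj => by simp [ha.2 j hj, hb.2 j hj]⟩
      smul_mem' := fun s a ha => ⟨fun i => by simp [ha.1 i], fun j hj => by simp [ha.2 j hj]⟩ }
  obtain ⟨t, ht, hpos⟩ := yuan_aux W (fun d => hessQ (Lagr f h g lam0 mu0) xs d)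
    (fun d => l1 d * l2 d)
    (fun d d' => by
      refine ⟨fderiv ℝ (fderiv ℝ (Lagr f h g lam0 mu0)) xs d d' +
        fderiv ℝ (fderiv ℝ (Lagr f h g lam0 mu0)) xs d' d, fun s => ?_⟩
      simp only [hessQ, iteratedFDeriv_two_apply]
      simp
      ring)
    (fun d d' => ⟨l1 d * l2 d' + l1 d' * l2 d, fun s => by simp; ring⟩)
    (T ν1 - T (lam0, mu0)) (T ν2 - T (lam0, mu0))
    (sub_le_sub_right (hmin1 hν2) _)
    (fun d hd => by
      obtain ⟨lam, mu, hl, hp⟩ := sonc f h g hf hh hg xs hfeas hmin hmfcq d hd (hfd d hd)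
      have hm : (lam, mu) ∈ K := hl
      refine ⟨T (lam, mu) - T (lam0, mu0), ⟨sub_le_sub_right (hmin1 hm) _,
        sub_le_sub_right (hmax2 hm) _⟩, ?_⟩
      exact hp.trans_eq (hdiff _ hm d hd))
  have hoc := (hKv.linear_image T).ordConnected
  obtain ⟨ν, hν, hνt⟩ := hoc.out ⟨ν1, hν1, rfl⟩ ⟨ν2, hν2, rfl⟩
    (show t + T (lam0, mu0) ∈ Set.Icc (T ν1) (T ν2) from
      ⟨by linarith [ht.1], by linarith [ht.2]⟩)
  refine ⟨ν.1, ν.2, hν, fun d hd => ?_⟩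
  rw [hdiff ν hν d hd, hνt, add_sub_cancel_right]
  exact hpos d hd
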